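/- Let d ≥ 3, β = β_c, and for each n ≥ 3 let m_n² be the unique m² > 0 satisfying n^{−d} Σ_{w ∈ {0,…,n−1}^d} 1/(m² + η_w) = β_c. Then m_n² → 0 as n → ∞, and for all x, y ∈ ℤ^d, G_{n,m_n²}(x̄, ȳ) → G_{ℤ^d}(x,y) as n → ∞. -/

import Mathlib

open MeasureTheory ProbabilityTheory Filter Topology Matrix
open scoped Classical ENNReal

noncomputable section

/-- The massive lattice Green's function `G_{ℤ^d, m²}(x, y)`. -/
def massGreenZ (d : ℕ) (m2 : ℝ) (x y : Fin d → ℤ) : ℝ :=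
  ∫ t in Set.Icc (0 : Fin d → ℝ) 1,
    Real.cos (2 * Real.pi * ∑ i, ((x i : ℝ) - (y i : ℝ)) * t i) /
      (m2 + 2 * ∑ i, (1 - Real.cos (2 * Real.pi * t i)))

/-- The lattice Green's function `G_{ℤ^d}(x, y)` (for `d ≥ 3`). -/
def greenZ (d : ℕ) (x y : Fin d → ℤ) : ℝ := massGreenZ d 0 x y

/-- The critical inverse temperature `β_c = G_{ℤ^d}(0, 0)`. -/
def betaC (d : ℕ) : ℝ := greenZ d 0 0

/-- The eigenvalues `η_w = 2 ∑_i (1 − cos(2π w_i / n))` of the discrete Laplacian on the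
torus `T_n^d`. -/
def eta (d n : ℕ) (w : Fin d → Fin n) : ℝ :=
  2 * ∑ i, (1 - Real.cos (2 * Real.pi * ((w i : ℕ) : ℝ) / n))

/-- The massive Green's function `G_{n,m²}(x,y)` on the torus `T_n^d`. -/
def torusGreen (d n : ℕ) (m2 : ℝ) (x y : Fin d → ZMod n) : ℝ :=
  (1 / (n : ℝ) ^ d) * ∑ w : Fin d → Fin n,
    Real.cos (2 * Real.pi * (∑ i, ((w i : ℕ) : ℝ) * ((x i - y i).val : ℝ)) / n) /
      (m2 + eta d n w)

/-- The zero-average Green's function `G_n^0(x,y)` on the torus `T_n^d` (`d ≥ 3`). -/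
def torusGreen0 (d n : ℕ) (x y : Fin d → ZMod n) : ℝ :=
  (1 / (n : ℝ) ^ d) *
    ∑ w ∈ Finset.univ.filter (fun w : Fin d → Fin n => ∃ i, (w i : ℕ) ≠ 0),
      Real.cos (2 * Real.pi * (∑ i, ((w i : ℕ) : ℝ) * ((x i - y i).val : ℝ)) / n) / eta d n w

/-!
Write `σ` for the Fourier symbol of the Laplacian. The torus Green's function of mass `m` is a
Riemann sum of `cos (2π k · t) / (m + σ t)` over the unit cube, and `β_c = ∫ 1 / σ` is finite for
`d ≥ 3`. At a fixed mass `ε > 0` the Riemann sums of `1 / (ε + σ)` tend to `∫ 1 / (ε + σ) < β_c`;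
since they decrease in the mass, the critical mass is eventually below `ε`.

At vanishing mass the zeros of `σ` at the corners of the cube obstruct dominated convergence of the
Riemann sums of `cos (2π k · t) / (m + σ)`. It does apply to `(1 - cos (2π k · t)) / (m + σ)`, which
is at most `|k|²` because `1 - cos (2π k · t) ≤ |k|² σ`, and the Riemann sums of the remaining term
`1 / (m + σ)` are equal to `β_c` by the choice of the critical mass.
-/

section RiemannSums

variable {ι : Type*} {n : ℕ}

/-- The point `w / n` of the grid of mesh `1 / n` in the unit cube. -/
def gridPoint (w : ι → Fin n) : ι → ℝ := fun i => ((w i : ℕ) : ℝ) / n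

/-- The half-open cube of side `1 / n` with lower corner `gridPoint w`. -/
def gridCell (w : ι → Fin n) : Set (ι → ℝ) :=
  Set.univ.pi fun i => Set.Ico (((w i : ℕ) : ℝ) / n) ((((w i : ℕ) : ℝ) + 1) / n)

/-- Coordinatewise rounding down to a multiple of `1 / n`, for points with nonnegative
coordinates (the natural-number floor sends negative coordinates to `0`). -/
def gridFloor (n : ℕ) (t : ι → ℝ) : ι → ℝ := fun i => (⌊t i * n⌋₊ : ℝ) / n

lemma mem_gridCell_iff [NeZero n] {w : ι → Fin n} {t : ι → ℝ} :
    t ∈ gridCell w ↔ ∀ i, 0 ≤ t i ∧ ⌊t i * n⌋₊ = w i := by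
  have hn : (0 : ℝ) < n := mod_cast NeZero.pos n
  simp only [gridCell, Set.mem_univ_pi, Set.mem_Ico, div_le_iff₀ hn, lt_div_iff₀ hn]
  refine forall_congr' fun i => ⟨fun h => ?_, fun ⟨h₀, h⟩ => ?_⟩
  · have h₀ : 0 ≤ t i * n := (Nat.cast_nonneg _).trans h.1
    exact ⟨nonneg_of_mul_nonneg_left h₀ hn, (Nat.floor_eq_iff h₀).2 h⟩
  · exact (Nat.floor_eq_iff (by positivity)).1 h

lemma gridFloor_of_mem_gridCell [NeZero n] {w : ι → Fin n} {t : ι → ℝ} (ht : t ∈ gridCell w) :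
    gridFloor n t = gridPoint w := by
  funext i
  rw [gridFloor, gridPoint, (mem_gridCell_iff.1 ht i).2]

lemma pairwise_disjoint_gridCell [NeZero n] :
    Pairwise (Function.onFun Disjoint (gridCell : (ι → Fin n) → Set (ι → ℝ))) := by
  refine fun w w' hne => Set.disjoint_left.2 fun t ht ht' => hne (funext fun i => Fin.ext ?_)
  rw [← (mem_gridCell_iff.1 ht i).2, ← (mem_gridCell_iff.1 ht' i).2]

lemma iUnion_gridCell [NeZero n] :
    ⋃ w : ι → Fin n, gridCell w = Set.univ.pi fun _ => Set.Ico (0 : ℝ) 1 := by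
  have hn : (0 : ℝ) < n := mod_cast NeZero.pos n
  have floor_lt {a : ℝ} (ha : 0 ≤ a) : ⌊a * n⌋₊ < n ↔ a < 1 := by
    rw [Nat.floor_lt (by positivity), mul_lt_iff_lt_one_left hn]
  ext t
  simp only [Set.mem_iUnion, mem_gridCell_iff, Set.mem_univ_pi, Set.mem_Ico]
  constructor
  · rintro ⟨w, hw⟩ i
    exact ⟨(hw i).1, (floor_lt (hw i).1).1 ((hw i).2 ▸ (w i).2)⟩
  · exact fun ht => ⟨fun i => ⟨_, (floor_lt (ht i).1).2 (ht i).2⟩, fun i => ⟨(ht i).1, rfl⟩⟩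

lemma measurableSet_gridCell [Countable ι] (w : ι → Fin n) : MeasurableSet (gridCell w) :=
  .univ_pi fun _ => measurableSet_Ico

lemma measurable_gridFloor : Measurable (gridFloor n : (ι → ℝ) → ι → ℝ) :=
  measurable_pi_lambda _ fun i =>
    (measurable_from_top.comp (Nat.measurable_floor.comp (by fun_prop :
      Measurable fun t : ι → ℝ => t i * n))).div_const _

lemma tendsto_gridFloor {t : ι → ℝ} (ht : 0 ≤ t) :
    Tendsto (fun n : ℕ => gridFloor n t) atTop (𝓝 t) :=
  tendsto_pi_nhds.2 fun i =>
    (tendsto_nat_floor_mul_div_atTop (ht i)).comp tendsto_natCast_atTop_atTop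

variable [Fintype ι]

lemma volume_gridCell (w : ι → Fin n) :
    volume (gridCell w) = ENNReal.ofReal (1 / (n : ℝ) ^ Fintype.card ι) := by
  simp only [gridCell, Real.volume_pi_Ico, ← sub_div, add_sub_cancel_left, Finset.prod_const,
    Finset.card_univ]
  rw [← ENNReal.ofReal_pow (by positivity), _root_.one_div_pow]

variable [DecidableEq ι] {E : Type*} [NormedAddCommGroup E] [NormedSpace ℝ E]

/-- The mean of `f` over the `n ^ d` grid points `w / n` of the `d`-dimensional unit cube, that is,
the Riemann sum of mesh `1 / n`. -/
def gridMean (n : ℕ) (f : (ι → ℝ) → E) : E :=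
  (1 / (n : ℝ) ^ Fintype.card ι) • ∑ w : ι → Fin n, f (gridPoint w)

lemma gridMean_mono {f g : (ι → ℝ) → ℝ} (hfg : f ≤ g) : gridMean n f ≤ gridMean n g :=
  smul_le_smul_of_nonneg_left (Finset.sum_le_sum fun w _ => hfg (gridPoint w)) (by positivity)

lemma gridMean_sub (f g : (ι → ℝ) → E) :
    gridMean n (fun t => f t - g t) = gridMean n f - gridMean n g := by
  simp only [gridMean, Finset.sum_sub_distrib, smul_sub]

variable [CompleteSpace E]

lemma gridMean_eq_setIntegral [NeZero n] (f : (ι → ℝ) → E) :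
    gridMean n f = ∫ t in Set.Icc (0 : ι → ℝ) 1, f (gridFloor n t) := by
  have hcover : (⋃ w : ι → Fin n, gridCell w) =ᵐ[volume] Set.Icc (0 : ι → ℝ) 1 := by
    rw [iUnion_gridCell]
    exact Measure.univ_pi_Ico_ae_eq_Icc (f := (0 : ι → ℝ)) (g := 1)
  have hconst (w : ι → Fin n) :
      Set.EqOn (fun t => f (gridFloor n t)) (fun _ => f (gridPoint w)) (gridCell w) :=
    fun t ht => congrArg f (gridFloor_of_mem_gridCell ht)
  have hint (w : ι → Fin n) : IntegrableOn (fun t => f (gridFloor n t)) (gridCell w) :=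
    (integrableOn_congr_fun (hconst w) (measurableSet_gridCell w)).2
      (integrableOn_const (by simp [volume_gridCell]))
  rw [← setIntegral_congr_set hcover,
    integral_iUnion_fintype measurableSet_gridCell pairwise_disjoint_gridCell hint, gridMean,
    Finset.smul_sum]
  refine Finset.sum_congr rfl fun w _ => ?_
  rw [setIntegral_congr_fun (measurableSet_gridCell w) (hconst w), setIntegral_const,
    Measure.real, volume_gridCell, ENNReal.toReal_ofReal (by positivity)]

lemma tendsto_gridMean_setIntegral {f : ℕ → (ι → ℝ) → E} {F : (ι → ℝ) → E} {C : ℝ}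
    (hf : ∀ n, StronglyMeasurable (f n)) (hC : ∀ᶠ n in atTop, ∀ t, ‖f n t‖ ≤ C)
    (hlim : ∀ᵐ t ∂volume.restrict (Set.Icc (0 : ι → ℝ) 1),
      Tendsto (fun p : ℕ × (ι → ℝ) => f p.1 p.2) (atTop ×ˢ 𝓝 t) (𝓝 (F t))) :
    Tendsto (fun n => gridMean n (f n)) atTop (𝓝 (∫ t in Set.Icc (0 : ι → ℝ) 1, F t)) := by
  have hint : Tendsto (fun n => ∫ t in Set.Icc (0 : ι → ℝ) 1, f n (gridFloor n t)) atTop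
      (𝓝 (∫ t in Set.Icc (0 : ι → ℝ) 1, F t)) := by
    refine tendsto_integral_filter_of_dominated_convergence (fun _ => C) ?_ ?_ ?_ ?_
    · exact .of_forall fun n => ((hf n).comp_measurable measurable_gridFloor).aestronglyMeasurable
    · filter_upwards [hC] with n hn using .of_forall fun t => hn _
    · exact integrableOn_const isCompact_Icc.measure_lt_top.ne
    · filter_upwards [hlim, ae_restrict_mem measurableSet_Icc] with t ht htmem
      exact ht.comp (tendsto_id.prodMk (tendsto_gridFloor htmem.1))
  refine hint.congr' ?_
  filter_upwards [eventually_gt_atTop 0] with n hn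
  have : NeZero n := ⟨hn.ne'⟩
  exact (gridMean_eq_setIntegral (f n)).symm

end RiemannSums

section SineBounds

lemma abs_sin_add_le (a b : ℝ) : |Real.sin (a + b)| ≤ |Real.sin a| + |Real.sin b| :=
  calc |Real.sin (a + b)|
      ≤ |Real.sin a| * |Real.cos b| + |Real.cos a| * |Real.sin b| := by
        rw [Real.sin_add, ← abs_mul, ← abs_mul]
        exact abs_add_le _ _
    _ ≤ |Real.sin a| + |Real.sin b| :=
        add_le_add (mul_le_of_le_one_right (abs_nonneg _) (Real.abs_cos_le_one b))
          (mul_le_of_le_one_left (abs_nonneg _) (Real.abs_cos_le_one a))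

lemma abs_sin_sum_le {ι : Type*} (s : Finset ι) (a : ι → ℝ) :
    |Real.sin (∑ i ∈ s, a i)| ≤ ∑ i ∈ s, |Real.sin (a i)| :=
  Finset.le_sum_of_subadditive (fun x => |Real.sin x|) (by simp) abs_sin_add_le s a

lemma abs_sin_int_mul_le (k : ℤ) (a : ℝ) : |Real.sin (k * a)| ≤ |(k : ℝ)| * |Real.sin a| := by
  have hnat (m : ℕ) : |Real.sin (m * a)| ≤ m * |Real.sin a| := by
    simpa using abs_sin_sum_le (Finset.range m) fun _ => a
  obtain ⟨m, rfl | rfl⟩ := k.eq_nat_or_neg <;> simpa using hnat m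

lemma min_le_sin_pi_mul {x : ℝ} (hx : x ∈ Set.Icc (0 : ℝ) 1) :
    min x (1 - x) ≤ Real.sin (Real.pi * x) := by
  have hsin {y : ℝ} (h₀ : 0 ≤ y) (h₁ : y ≤ 1 / 2) : y ≤ Real.sin (Real.pi * y) := by
    have h := Real.mul_le_sin (x := Real.pi * y) (by positivity) (by nlinarith [Real.pi_pos])
    rw [← mul_assoc, div_mul_cancel₀ _ Real.pi_ne_zero] at h
    linarith
  rcases le_total x (1 / 2) with h | h
  · exact (min_le_left _ _).trans (hsin hx.1 h)
  · refine (min_le_right _ _).trans ?_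
    have := hsin (y := 1 - x) (by linarith [hx.2]) (by linarith)
    rwa [mul_sub, mul_one, Real.sin_pi_sub] at this

lemma integrableOn_sin_pi_mul_rpow {r : ℝ} (hr : -1 < r) (hr₀ : r ≤ 0) :
    IntegrableOn (fun x => Real.sin (Real.pi * x) ^ r) (Set.Icc (0 : ℝ) 1) := by
  have hleft : IntervalIntegrable (fun x : ℝ => x ^ r) volume 0 1 :=
    intervalIntegral.intervalIntegrable_rpow' hr
  have hright : IntervalIntegrable (fun x : ℝ => (1 - x) ^ r) volume 0 1 := by
    simpa using (hleft.comp_sub_left 1).symm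
  have hdom : IntegrableOn (fun x : ℝ => x ^ r + (1 - x) ^ r) (Set.Ioo 0 1) := by
    rw [← intervalIntegrable_iff_integrableOn_Ioo_of_le zero_le_one]
    exact hleft.add hright
  rw [integrableOn_Icc_iff_integrableOn_Ioo]
  refine hdom.mono' (Measurable.aestronglyMeasurable (by fun_prop)) ?_
  filter_upwards [ae_restrict_mem measurableSet_Ioo] with x hx
  have hx₁ : 0 < 1 - x := sub_pos.2 hx.2
  have hsin := min_le_sin_pi_mul (Set.Ioo_subset_Icc_self hx)
  rw [Real.norm_of_nonneg (Real.rpow_nonneg ((lt_min hx.1 hx₁).le.trans hsin) r)]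
  calc Real.sin (Real.pi * x) ^ r
      ≤ min x (1 - x) ^ r := Real.rpow_le_rpow_of_nonpos (lt_min hx.1 hx₁) hsin hr₀
    _ ≤ x ^ r + (1 - x) ^ r := by
        have := Real.rpow_nonneg hx.1.le r
        have := Real.rpow_nonneg hx₁.le r
        rcases min_choice x (1 - x) with h | h <;> rw [h] <;> linarith

end SineBounds

section LaplacianSymbol

variable {ι : Type*} [Fintype ι]

/-- The Fourier symbol of the discrete Laplacian on `ℤ^d`; its values at the grid points `w / n` are
the eigenvalues of the Laplacian on the discrete torus. -/
def laplacianSymbol (t : ι → ℝ) : ℝ := 2 * ∑ i, (1 - Real.cos (2 * Real.pi * t i))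

/-- The real part of the character of `(ℝ / ℤ)^d` with frequency `k`. -/
def fourierCos (k : ι → ℤ) (t : ι → ℝ) : ℝ := Real.cos (2 * Real.pi * ∑ i, (k i : ℝ) * t i)

lemma laplacianSymbol_eq_sum_sin_sq (t : ι → ℝ) :
    laplacianSymbol t = 4 * ∑ i, Real.sin (Real.pi * t i) ^ 2 := by
  simp only [laplacianSymbol, mul_assoc, Real.cos_two_mul_eq_one_sub, sub_sub_cancel,
    ← Finset.mul_sum]
  ring

lemma continuous_laplacianSymbol : Continuous (laplacianSymbol : (ι → ℝ) → ℝ) := by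
  unfold laplacianSymbol
  fun_prop

lemma laplacianSymbol_nonneg (t : ι → ℝ) : 0 ≤ laplacianSymbol t := by
  rw [laplacianSymbol_eq_sum_sin_sq]
  positivity

lemma ae_restrict_Icc_forall_mem_Ioo :
    ∀ᵐ t ∂volume.restrict (Set.Icc (0 : ι → ℝ) 1), ∀ i, t i ∈ Set.Ioo (0 : ℝ) 1 := by
  have hinterior : Set.univ.pi (fun _ : ι => Set.Ioo (0 : ℝ) 1) =ᵐ[volume] Set.Icc 0 1 :=
    Measure.univ_pi_Ioo_ae_eq_Icc (f := (0 : ι → ℝ)) (g := 1)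
  rw [← Measure.restrict_congr_set hinterior]
  filter_upwards [ae_restrict_mem (.univ_pi fun _ => measurableSet_Ioo)] with t ht i
  exact ht i (Set.mem_univ i)

lemma sin_pi_mul_pos {x : ℝ} (hx : x ∈ Set.Ioo (0 : ℝ) 1) : 0 < Real.sin (Real.pi * x) :=
  (lt_min hx.1 (sub_pos.2 hx.2)).trans_le (min_le_sin_pi_mul (Set.Ioo_subset_Icc_self hx))

lemma ae_laplacianSymbol_pos [Nonempty ι] :
    ∀ᵐ t ∂volume.restrict (Set.Icc (0 : ι → ℝ) 1), 0 < laplacianSymbol t := by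
  filter_upwards [ae_restrict_Icc_forall_mem_Ioo] with t ht
  rw [laplacianSymbol_eq_sum_sin_sq]
  exact mul_pos four_pos
    (Finset.sum_pos (fun i _ => pow_pos (sin_pi_mul_pos (ht i)) 2) Finset.univ_nonempty)

lemma prod_sin_rpow_le_laplacianSymbol [Nonempty ι] {t : ι → ℝ}
    (ht : ∀ i, t i ∈ Set.Ioo (0 : ℝ) 1) :
    ∏ i, Real.sin (Real.pi * t i) ^ (2 / Fintype.card ι : ℝ) ≤ laplacianSymbol t := by
  have hcard : (1 : ℝ) ≤ Fintype.card ι := mod_cast Fintype.card_pos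
  calc ∏ i, Real.sin (Real.pi * t i) ^ (2 / Fintype.card ι : ℝ)
      = ∏ i, (Real.sin (Real.pi * t i) ^ 2) ^ (1 / Fintype.card ι : ℝ) := by
        refine Finset.prod_congr rfl fun i _ => ?_
        rw [← Real.rpow_natCast_mul (sin_pi_mul_pos (ht i)).le, Nat.cast_ofNat, mul_one_div]
    _ ≤ ∑ i, (1 / Fintype.card ι : ℝ) * Real.sin (Real.pi * t i) ^ 2 :=
        Real.geom_mean_le_arith_mean_weighted _ _ _ (fun _ _ => by positivity)
          (by simp) (fun _ _ => by positivity)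
    _ ≤ 4 * ∑ i, Real.sin (Real.pi * t i) ^ 2 := by
        rw [← Finset.mul_sum]
        gcongr
        exact (div_le_one_of_le₀ hcard (by positivity)).trans (by norm_num)
    _ = laplacianSymbol t := (laplacianSymbol_eq_sum_sin_sq t).symm

-- By AM-GM, `1 / σ` is dominated by a product of one-dimensional powers `|sin (π tᵢ)| ^ (-2 / d)`,
-- whose exponent is above `-1` exactly when `d ≥ 3`.
lemma integrableOn_inv_laplacianSymbol (hι : 3 ≤ Fintype.card ι) :
    IntegrableOn (fun t : ι → ℝ => (laplacianSymbol t)⁻¹) (Set.Icc 0 1) := by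
  have : Nonempty ι := Fintype.card_pos_iff.1 (by omega)
  have hcard : (3 : ℝ) ≤ Fintype.card ι := mod_cast hι
  have hexp : -1 < -(2 / Fintype.card ι : ℝ) := by
    rw [neg_lt_neg_iff, div_lt_one (by positivity)]
    linarith
  have hdom : IntegrableOn
      (fun t : ι → ℝ => ∏ i, Real.sin (Real.pi * t i) ^ (-(2 / Fintype.card ι : ℝ)))
      (Set.Icc 0 1) := by
    rw [← Set.pi_univ_Icc, IntegrableOn, volume_pi, Measure.restrict_pi_pi]
    exact Integrable.fintype_prod fun _ =>
      integrableOn_sin_pi_mul_rpow hexp (neg_nonpos.2 (by positivity))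
  refine hdom.mono' continuous_laplacianSymbol.measurable.inv.aestronglyMeasurable ?_
  filter_upwards [ae_restrict_Icc_forall_mem_Ioo] with t ht
  have hsin (i : ι) : 0 < Real.sin (Real.pi * t i) := sin_pi_mul_pos (ht i)
  rw [Real.norm_of_nonneg (inv_nonneg.2 (laplacianSymbol_nonneg t))]
  simp only [Real.rpow_neg (hsin _).le, Finset.prod_inv_distrib]
  exact inv_anti₀ (Finset.prod_pos fun i _ => Real.rpow_pos_of_pos (hsin i) _)
    (prod_sin_rpow_le_laplacianSymbol ht)

lemma continuous_fourierCos (k : ι → ℤ) : Continuous (fourierCos k) := by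
  unfold fourierCos
  fun_prop

lemma one_sub_fourierCos_nonneg (k : ι → ℤ) (t : ι → ℝ) : 0 ≤ 1 - fourierCos k t :=
  sub_nonneg.2 (Real.cos_le_one _)

lemma one_sub_fourierCos_le (k : ι → ℤ) (t : ι → ℝ) :
    1 - fourierCos k t ≤ (∑ i, (k i : ℝ) ^ 2) * laplacianSymbol t := by
  have hsin : |Real.sin (Real.pi * ∑ i, (k i : ℝ) * t i)|
      ≤ ∑ i, |(k i : ℝ)| * |Real.sin (Real.pi * t i)| := by
    simp only [Finset.mul_sum, mul_left_comm Real.pi]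
    exact (abs_sin_sum_le _ _).trans (Finset.sum_le_sum fun i _ => abs_sin_int_mul_le _ _)
  calc 1 - fourierCos k t
      = 2 * |Real.sin (Real.pi * ∑ i, (k i : ℝ) * t i)| ^ 2 := by
        rw [fourierCos, mul_assoc, Real.cos_two_mul_eq_one_sub, sub_sub_cancel, sq_abs]
    _ ≤ 2 * (∑ i, |(k i : ℝ)| * |Real.sin (Real.pi * t i)|) ^ 2 := by gcongr
    _ ≤ 2 * ((∑ i, |(k i : ℝ)| ^ 2) * ∑ i, |Real.sin (Real.pi * t i)| ^ 2) := by
        gcongr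
        exact Finset.sum_mul_sq_le_sq_mul_sq _ _ _
    _ ≤ (∑ i, (k i : ℝ) ^ 2) * (4 * ∑ i, Real.sin (Real.pi * t i) ^ 2) := by
        simp only [sq_abs]
        have : 0 ≤ (∑ i, (k i : ℝ) ^ 2) * ∑ i, Real.sin (Real.pi * t i) ^ 2 := by positivity
        linarith
    _ = (∑ i, (k i : ℝ) ^ 2) * laplacianSymbol t := by rw [laplacianSymbol_eq_sum_sin_sq]

end LaplacianSymbol

section CriticalMass

variable {ι : Type*} [Fintype ι]

lemma integral_lt_integral_of_ae_lt {α : Type*} [MeasurableSpace α] {μ : Measure α} [NeZero μ]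
    {f g : α → ℝ} (hf : Integrable f μ) (hg : Integrable g μ) (hfg : ∀ᵐ x ∂μ, f x < g x) :
    ∫ x, f x ∂μ < ∫ x, g x ∂μ := by
  have hle : f ≤ᵐ[μ] g := hfg.mono fun _ => le_of_lt
  refine (integral_mono_ae hf hg hle).lt_of_ne fun heq => ?_
  obtain ⟨x, hlt, hx⟩ := (hfg.and ((integral_eq_iff_of_ae_le hf hg hle).1 heq)).exists
  exact hlt.ne hx

lemma integrableOn_inv_add_laplacianSymbol {ε : ℝ} (hε : 0 < ε) :
    IntegrableOn (fun t : ι → ℝ => (ε + laplacianSymbol t)⁻¹) (Set.Icc 0 1) :=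
  ((continuous_laplacianSymbol.const_add ε).inv₀ fun t =>
    (add_pos_of_pos_of_nonneg hε (laplacianSymbol_nonneg t)).ne').continuousOn.integrableOn_compact
      isCompact_Icc

lemma setIntegral_inv_add_laplacianSymbol_lt [Nonempty ι] {ε : ℝ} (hε : 0 < ε)
    (hint : IntegrableOn (fun t : ι → ℝ => (laplacianSymbol t)⁻¹) (Set.Icc 0 1)) :
    ∫ t in Set.Icc (0 : ι → ℝ) 1, (ε + laplacianSymbol t)⁻¹
      < ∫ t in Set.Icc (0 : ι → ℝ) 1, (laplacianSymbol t)⁻¹ := by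
  have : NeZero (volume.restrict (Set.Icc (0 : ι → ℝ) 1)) :=
    ⟨by simp [Measure.restrict_eq_zero, Real.volume_Icc_pi]⟩
  refine integral_lt_integral_of_ae_lt (integrableOn_inv_add_laplacianSymbol hε) hint ?_
  filter_upwards [ae_laplacianSymbol_pos] with t ht
  exact inv_strictAnti₀ ht (lt_add_of_pos_left _ hε)

variable [DecidableEq ι]

lemma tendsto_gridMean_inv_add_laplacianSymbol {ε : ℝ} (hε : 0 < ε) :
    Tendsto (fun n => gridMean n fun t : ι → ℝ => (ε + laplacianSymbol t)⁻¹) atTop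
      (𝓝 (∫ t in Set.Icc (0 : ι → ℝ) 1, (ε + laplacianSymbol t)⁻¹)) := by
  have hpos (t : ι → ℝ) : 0 < ε + laplacianSymbol t :=
    add_pos_of_pos_of_nonneg hε (laplacianSymbol_nonneg t)
  have hcont : Continuous fun t : ι → ℝ => (ε + laplacianSymbol t)⁻¹ :=
    (continuous_laplacianSymbol.const_add ε).inv₀ fun t => (hpos t).ne'
  refine tendsto_gridMean_setIntegral (C := ε⁻¹) (fun _ => hcont.stronglyMeasurable)
    (.of_forall fun _ t => ?_) (.of_forall fun t => (hcont.tendsto t).comp tendsto_snd)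
  rw [Real.norm_of_nonneg (inv_nonneg.2 (hpos t).le)]
  exact inv_anti₀ hε (le_add_of_nonneg_right (laplacianSymbol_nonneg t))

variable [Nonempty ι] {m : ℕ → ℝ}

lemma tendsto_zero_of_gridMean_inv_add_eq
    (hint : IntegrableOn (fun t : ι → ℝ => (laplacianSymbol t)⁻¹) (Set.Icc 0 1))
    (hpos : ∀ᶠ n in atTop, 0 < m n)
    (hcrit : ∀ᶠ n in atTop, gridMean n (fun t : ι → ℝ => (m n + laplacianSymbol t)⁻¹)
      = ∫ t in Set.Icc (0 : ι → ℝ) 1, (laplacianSymbol t)⁻¹) :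
    Tendsto m atTop (𝓝 0) := by
  refine tendsto_order.2 ⟨fun a ha => hpos.mono fun _ => ha.trans, fun ε hε => ?_⟩
  filter_upwards [hcrit, (tendsto_gridMean_inv_add_laplacianSymbol hε).eventually_lt_const
    (setIntegral_inv_add_laplacianSymbol_lt hε hint)] with n hn hlt
  by_contra! hle
  refine (hn ▸ hlt).not_ge (gridMean_mono fun t => ?_)
  have := laplacianSymbol_nonneg t
  exact inv_anti₀ (by positivity) (by gcongr)

lemma tendsto_gridMean_one_sub_fourierCos_div (k : ι → ℤ) (hnonneg : ∀ᶠ n in atTop, 0 ≤ m n)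
    (hm : Tendsto m atTop (𝓝 0)) :
    Tendsto (fun n => gridMean n fun t => (1 - fourierCos k t) / (m n + laplacianSymbol t)) atTop
      (𝓝 (∫ t in Set.Icc (0 : ι → ℝ) 1, (1 - fourierCos k t) / laplacianSymbol t)) := by
  have hnum : Continuous fun t => 1 - fourierCos k t :=
    continuous_const.sub (continuous_fourierCos k)
  refine tendsto_gridMean_setIntegral (C := ∑ i, (k i : ℝ) ^ 2) (fun n => ?_) ?_ ?_
  · exact (hnum.measurable.div
      (continuous_laplacianSymbol.measurable.const_add (m n))).stronglyMeasurable
  · filter_upwards [hnonneg] with n hn t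
    have hsymbol : laplacianSymbol t ≤ m n + laplacianSymbol t := le_add_of_nonneg_left hn
    have hden := (laplacianSymbol_nonneg t).trans hsymbol
    rw [Real.norm_of_nonneg (div_nonneg (one_sub_fourierCos_nonneg k t) hden)]
    refine div_le_of_le_mul₀ hden (by positivity) ((one_sub_fourierCos_le k t).trans ?_)
    gcongr
  · filter_upwards [ae_laplacianSymbol_pos] with t ht
    have hden : Tendsto (fun p : ℕ × (ι → ℝ) => m p.1 + laplacianSymbol p.2) (atTop ×ˢ 𝓝 t)
        (𝓝 (laplacianSymbol t)) := by
      simpa using (hm.comp tendsto_fst).add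
        ((continuous_laplacianSymbol.tendsto t).comp tendsto_snd)
    exact ((hnum.tendsto t).comp tendsto_snd).div hden ht.ne'

lemma tendsto_gridMean_fourierCos_div (k : ι → ℤ)
    (hint : IntegrableOn (fun t : ι → ℝ => (laplacianSymbol t)⁻¹) (Set.Icc 0 1))
    (hpos : ∀ᶠ n in atTop, 0 < m n)
    (hcrit : ∀ᶠ n in atTop, gridMean n (fun t : ι → ℝ => (m n + laplacianSymbol t)⁻¹)
      = ∫ t in Set.Icc (0 : ι → ℝ) 1, (laplacianSymbol t)⁻¹) :
    Tendsto (fun n => gridMean n fun t => fourierCos k t / (m n + laplacianSymbol t)) atTop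
      (𝓝 (∫ t in Set.Icc (0 : ι → ℝ) 1, fourierCos k t / laplacianSymbol t)) := by
  have hint_cos : IntegrableOn (fun t => fourierCos k t / laplacianSymbol t) (Set.Icc 0 1) := by
    refine Integrable.mono hint ((continuous_fourierCos k).measurable.div
      continuous_laplacianSymbol.measurable).aestronglyMeasurable (.of_forall fun t => ?_)
    rw [div_eq_mul_inv, norm_mul]
    exact mul_le_of_le_one_left (norm_nonneg _) (Real.abs_cos_le_one _)
  have hlim := (tendsto_gridMean_one_sub_fourierCos_div k (hpos.mono fun _ => le_of_lt)
    (tendsto_zero_of_gridMean_inv_add_eq hint hpos hcrit)).const_sub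
      (∫ t in Set.Icc (0 : ι → ℝ) 1, (laplacianSymbol t)⁻¹)
  simp only [sub_div, one_div, integral_sub hint hint_cos, sub_sub_cancel] at hlim
  refine hlim.congr' ?_
  filter_upwards [hcrit] with n hn
  rw [gridMean_sub, hn, sub_sub_cancel]

end CriticalMass

section TorusGreen

variable {d n : ℕ}

lemma eta_eq_laplacianSymbol (w : Fin d → Fin n) : eta d n w = laplacianSymbol (gridPoint w) := by
  simp only [eta, laplacianSymbol, gridPoint, mul_div_assoc]

lemma greenZ_eq_setIntegral (x y : Fin d → ℤ) :
    greenZ d x y = ∫ t in Set.Icc (0 : Fin d → ℝ) 1, fourierCos (x - y) t / laplacianSymbol t := by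
  simp [greenZ, massGreenZ, fourierCos, laplacianSymbol]

lemma betaC_eq_setIntegral :
    betaC d = ∫ t in Set.Icc (0 : Fin d → ℝ) 1, (laplacianSymbol t)⁻¹ := by
  simp [betaC, greenZ_eq_setIntegral, fourierCos]

lemma gridMean_inv_add_laplacianSymbol (a : ℝ) :
    gridMean n (fun t : Fin d → ℝ => (a + laplacianSymbol t)⁻¹)
      = (1 / (n : ℝ) ^ d) * ∑ w : Fin d → Fin n, 1 / (a + eta d n w) := by
  simp [gridMean, eta_eq_laplacianSymbol]

lemma fourierCos_gridPoint_eq_of_intCast_eq [NeZero n] {k l : Fin d → ℤ}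
    (hkl : ∀ i, (k i : ZMod n) = l i) (w : Fin d → Fin n) :
    fourierCos k (gridPoint w) = fourierCos l (gridPoint w) := by
  choose q hq using fun i => (ZMod.intCast_eq_intCast_iff_dvd_sub _ _ _).1 (hkl i)
  have hn : (n : ℝ) ≠ 0 := NeZero.ne _
  have hl (i : Fin d) : (l i : ℝ) = k i + n * q i := by
    exact_mod_cast eq_add_of_sub_eq' (hq i)
  have hphase : 2 * Real.pi * ∑ i, (l i : ℝ) * gridPoint w i
      = 2 * Real.pi * ∑ i, (k i : ℝ) * gridPoint w i
        + ((∑ i, q i * ((w i : ℕ) : ℤ) : ℤ) : ℝ) * (2 * Real.pi) := by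
    push_cast
    rw [mul_comm _ (2 * Real.pi), ← mul_add, ← Finset.sum_add_distrib]
    congr 1
    refine Finset.sum_congr rfl fun i _ => ?_
    rw [hl, gridPoint]
    field_simp
  rw [fourierCos, fourierCos, hphase, Real.cos_add_int_mul_two_pi]

lemma torusGreen_intCast_eq_gridMean [NeZero n] (a : ℝ) (x y : Fin d → ℤ) :
    torusGreen d n a (fun i => (x i : ZMod n)) (fun i => (y i : ZMod n))
      = gridMean n fun t => fourierCos (x - y) t / (a + laplacianSymbol t) := by
  rw [torusGreen, gridMean, Fintype.card_fin, smul_eq_mul]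
  congr 1
  refine Finset.sum_congr rfl fun w _ => ?_
  rw [eta_eq_laplacianSymbol, ← fourierCos_gridPoint_eq_of_intCast_eq
    (k := fun i => (((x i : ZMod n) - (y i : ZMod n)).val : ℤ)) (by simp)]
  simp only [fourierCos, gridPoint, Int.cast_natCast, mul_div_assoc, Finset.sum_div]
  simp only [mul_comm, div_mul_eq_mul_div, mul_div_assoc]

end TorusGreen

/-- Critical asymptotics of the torus mass and Green's function:
for `d ≥ 3`, `β = β_c`, and `m_n²` the unique positive solution of
`n^{-d} ∑_w 1/(m² + η_w) = β_c`, one has `m_n² → 0` and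
`G_{n,m_n²}(x̄,ȳ) → G_{ℤ^d}(x,y)` for all `x, y ∈ ℤ^d`. -/
theorem torus_mass_critical_asymptotics
    (d : ℕ) (hd : 3 ≤ d) (m2 : ℕ → ℝ)
    (hm2 : ∀ n : ℕ, 3 ≤ n → 0 < m2 n ∧
      (1 / (n : ℝ) ^ d) * ∑ w : Fin d → Fin n, 1 / (m2 n + eta d n w) = betaC d) :
    Tendsto (fun n : ℕ => m2 n) atTop (nhds 0) ∧
    ∀ x y : Fin d → ℤ,
      Tendsto
        (fun n : ℕ => torusGreen d n (m2 n)
          (fun i => (x i : ZMod n)) (fun i => (y i : ZMod n)))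
        atTop (nhds (greenZ d x y)) := by
  have : Nonempty (Fin d) := ⟨⟨0, by omega⟩⟩
  have hint : IntegrableOn (fun t : Fin d → ℝ => (laplacianSymbol t)⁻¹) (Set.Icc 0 1) :=
    integrableOn_inv_laplacianSymbol (by simpa using hd)
  have hpos : ∀ᶠ n in atTop, 0 < m2 n := by
    filter_upwards [eventually_ge_atTop 3] with n hn using (hm2 n hn).1
  have hcrit : ∀ᶠ n in atTop, gridMean n (fun t : Fin d → ℝ => (m2 n + laplacianSymbol t)⁻¹)
      = ∫ t in Set.Icc (0 : Fin d → ℝ) 1, (laplacianSymbol t)⁻¹ := by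
    filter_upwards [eventually_ge_atTop 3] with n hn
    rw [gridMean_inv_add_laplacianSymbol, (hm2 n hn).2, betaC_eq_setIntegral]
  refine ⟨tendsto_zero_of_gridMean_inv_add_eq hint hpos hcrit, fun x y => ?_⟩
  rw [greenZ_eq_setIntegral]
  refine (tendsto_gridMean_fourierCos_div (x - y) hint hpos hcrit).congr' ?_
  filter_upwards [eventually_gt_atTop 0] with n hn
  have : NeZero n := ⟨hn.ne'⟩
  exact (torusGreen_intCast_eq_gridMean (m2 n) x y).symm

end
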